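/- For every δ > 0 there exists a constant C = C(δ) such that for all sufficiently large real x and every integer i with (1 + δ) log log x ≤ i ≤ (2 − δ) log log x, the number M_i(x) of positive integers n ≤ x with Ω(n) ≥ i satisfies M_i(x) < C · (x / log x) · (log log x)^{i−1} / (i−1)!. -/

import Mathlib

/-!
Write `n = b² s` with `s` squarefree and fix `0 < ε`. For `n ≤ x`, `log x = log s + log (x / s)`,
where `log s ≤ ∑_{p ∣ n} log p` and `log (x / s) = log ((x / n) b²) ≤ (x / n) b^{2ε} / ε`. Summing
over the `n ≤ x` with `Ω(n) ≥ k + 1`, and using Chebyshev's bound `θ(y) ≪ y` after replacing `n` by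
`n / p` in the first part, both parts are `≪ x ∑ b^{2ε} / n`, the sum being over the `n ≤ x` with
`Ω(n) ≥ k`.

Let `Q = ∑_{p ≤ x} 1 / p = log log x + O(1)`. For given `b` the squarefree part has at least
`j = k - 2 Ω(b)` prime factors, so the reciprocals of the possible `s` sum to at most
`∑_{m ≥ j} Q^m / m!`. Since `k / Q` stays above `1`, this tail is geometric and is
`≪ (Q^k / k!) (k / Q)^{2 Ω(b)}`. Since `k / Q` stays below some `Y < 2`, the remaining series
`∑_b Y^{2 Ω(b)} / b^{2 - 2ε}` converges for small `ε`. Finally `Q^k ≪ (log log x)^k` because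
`k = O(log log x)`.
-/

open Finset Real
open scoped ArithmeticFunction.Omega ArithmeticFunction.vonMangoldt Chebyshev Nat

section PrimeReciprocals

lemma sum_vonMangoldt_div_le {N : ℕ} (hN : 0 < N) :
    ∑ n ∈ Ioc 0 N, Λ n / n ≤ log N + (log 4 + 4) := by
  have hlog : ∑ n ∈ Ioc 0 N, Λ n * (N / n : ℕ) ≤ N * log N := by
    calc ∑ n ∈ Ioc 0 N, Λ n * (N / n : ℕ)
      _ = ∑ n ∈ Ioc 0 N, log n := by
        rw [← ArithmeticFunction.sum_Ioc_mul_zeta_eq_sum, ArithmeticFunction.vonMangoldt_mul_zeta]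
        simp only [ArithmeticFunction.log_apply]
      _ ≤ ∑ _n ∈ Ioc 0 N, log N := by
        gcongr with n hn
        · exact mod_cast (mem_Ioc.1 hn).1
        · exact (mem_Ioc.1 hn).2
      _ = N * log N := by simp
  have hpsi : ∑ n ∈ Ioc 0 N, Λ n ≤ (log 4 + 4) * N := by
    simpa [Chebyshev.psi] using Chebyshev.psi_le_const_mul_self N.cast_nonneg
  have hN' : (0 : ℝ) < N := mod_cast hN
  refine le_of_mul_le_mul_left ?_ hN'
  calc N * ∑ n ∈ Ioc 0 N, Λ n / n
    _ = ∑ n ∈ Ioc 0 N, Λ n * ((N : ℝ) / n) := by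
      rw [mul_sum]
      exact sum_congr rfl fun n _ ↦ by ring
    _ ≤ ∑ n ∈ Ioc 0 N, Λ n * ((N / n : ℕ) + 1) := by
      gcongr with n
      rw [← Nat.floor_div_eq_div (K := ℝ)]
      exact (Nat.lt_floor_add_one _).le
    _ = ∑ n ∈ Ioc 0 N, Λ n * (N / n : ℕ) + ∑ n ∈ Ioc 0 N, Λ n := by
      simp only [mul_add, mul_one, sum_add_distrib]
    _ ≤ N * (log N + (log 4 + 4)) := by linarith

lemma log_natCast_pos_of_two_le {n : ℕ} (hn : 2 ≤ n) : 0 < log n :=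
  log_pos (mod_cast hn)

-- Abel summation run as an induction: each increment of the left side is a multiple of a single
-- partial sum of `f`.
lemma sum_div_log_sub_le {f : ℕ → ℝ} {c : ℝ}
    (hf : ∀ N, 2 ≤ N → ∑ n ∈ Icc 2 N, f n ≤ log N + c) {N : ℕ} (hN : 2 ≤ N) :
    ∑ n ∈ Icc 2 N, f n / log n - (∑ n ∈ Icc 2 N, f n) / log N ≤
      log (log N) - log (log 2) + c * (1 / log 2 - 1 / log N) := by
  induction N, hN using Nat.le_induction with
  | base => simp
  | succ N hN ih =>
    have hl := log_natCast_pos_of_two_le hN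
    have hl' : 0 < log (N + 1 : ℕ) := log_natCast_pos_of_two_le (by omega)
    have hle : log N ≤ log (N + 1 : ℕ) := log_le_log (by positivity) (by simp)
    have hloglog : 1 - log N / log (N + 1 : ℕ) ≤ log (log (N + 1 : ℕ)) - log (log N) := by
      simpa only [inv_div, log_div hl'.ne' hl.ne'] using
        one_sub_inv_le_log_of_pos (div_pos hl' hl)
    have hstep := mul_le_mul_of_nonneg_right (hf N hN)
      (sub_nonneg.2 (one_div_le_one_div_of_le hl hle))
    rw [sum_Icc_succ_top (by omega), sum_Icc_succ_top (by omega)]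
    set A := ∑ n ∈ Icc 2 N, f n
    calc (∑ n ∈ Icc 2 N, f n / log n + f (N + 1) / log (N + 1 : ℕ)) -
          (A + f (N + 1)) / log (N + 1 : ℕ)
      _ = (∑ n ∈ Icc 2 N, f n / log n - A / log N) +
          A * (1 / log N - 1 / log (N + 1 : ℕ)) := by ring
      _ ≤ (log (log N) - log (log 2) + c * (1 / log 2 - 1 / log N)) +
          (log N + c) * (1 / log N - 1 / log (N + 1 : ℕ)) := add_le_add ih hstep
      _ = (log (log N) + (1 - log N / log (N + 1 : ℕ))) - log (log 2) +
          c * (1 / log 2 - 1 / log (N + 1 : ℕ)) := by field_simp; ring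
      _ ≤ _ := by linarith

lemma sum_div_log_le {f : ℕ → ℝ} {c : ℝ}
    (hf : ∀ N, 2 ≤ N → ∑ n ∈ Icc 2 N, f n ≤ log N + c) {N : ℕ} (hN : 2 ≤ N) :
    ∑ n ∈ Icc 2 N, f n / log n ≤ log (log N) + (1 - log (log 2) + c / log 2) := by
  have hl := log_natCast_pos_of_two_le hN
  have hlast : (∑ n ∈ Icc 2 N, f n) / log N ≤ 1 + c / log N := by
    rw [div_le_iff₀ hl, add_mul, div_mul_cancel₀ _ hl.ne', one_mul]
    exact hf N hN
  have hsub := sum_div_log_sub_le hf hN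
  have : c * (1 / log 2 - 1 / log N) = c / log 2 - c / log N := by ring
  linarith

lemma exists_sum_one_div_primesLE_le : ∃ c : ℝ, 0 ≤ c ∧ ∀ x : ℝ, 2 ≤ x →
    ∑ p ∈ ⌊x⌋₊.primesLE, (1 / p : ℝ) ≤ log (log x) + c := by
  refine ⟨1 - log (log 2) + (log 4 + 4) / log 2, ?_, fun x hx ↦ ?_⟩
  · have : log (log 2) ≤ 0 :=
      log_nonpos (log_nonneg one_le_two) (log_two_lt_d9.le.trans (by norm_num))
    have : 0 ≤ (log 4 + 4) / log 2 := by positivity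
    linarith
  have hN : 2 ≤ ⌊x⌋₊ := Nat.le_floor hx
  have hmertens (N : ℕ) (hN : 2 ≤ N) : ∑ n ∈ Icc 2 N, Λ n / n ≤ log N + (log 4 + 4) := by
    refine le_trans ?_ (sum_vonMangoldt_div_le (by omega))
    refine sum_le_sum_of_subset_of_nonneg (fun n hn ↦ ?_) fun n _ _ ↦
      div_nonneg ArithmeticFunction.vonMangoldt_nonneg n.cast_nonneg
    rw [mem_Icc] at hn
    rw [mem_Ioc]
    omega
  calc ∑ p ∈ ⌊x⌋₊.primesLE, (1 / p : ℝ)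
    _ = ∑ p ∈ ⌊x⌋₊.primesLE, Λ p / p / log p := sum_congr rfl fun p hp ↦ by
      have : log p ≠ 0 := (log_pos (mod_cast Nat.one_lt_of_mem_primesLE hp)).ne'
      rw [ArithmeticFunction.vonMangoldt_apply_prime (Nat.prime_of_mem_primesLE hp)]
      field_simp
    _ ≤ ∑ n ∈ Icc 2 ⌊x⌋₊, Λ n / n / log n :=
      sum_le_sum_of_subset_of_nonneg
        (fun p hp ↦ mem_Icc.2 ⟨Nat.two_le_of_mem_primesLE hp, Nat.le_of_mem_primesLE hp⟩)
        fun n _ _ ↦ div_nonneg (div_nonneg ArithmeticFunction.vonMangoldt_nonneg n.cast_nonneg)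
          (log_natCast_nonneg n)
    _ ≤ log (log ⌊x⌋₊) + (1 - log (log 2) + (log 4 + 4) / log 2) := sum_div_log_le hmertens hN
    _ ≤ _ := by
      gcongr
      · exact log_pos (mod_cast hN)
      · exact Nat.floor_le (by positivity)

end PrimeReciprocals

section ElementarySymmetric

variable {ι R K : Type*} [CommSemiring R] [Field K] [LinearOrder K] [IsStrictOrderedRing K]
  {s : Finset ι}

lemma sum_powersetCard_succ_insert_prod [DecidableEq ι] {a : ι} (ha : a ∉ s) (f : ι → R) (j : ℕ) :
    ∑ t ∈ (insert a s).powersetCard (j + 1), ∏ i ∈ t, f i =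
      ∑ t ∈ s.powersetCard (j + 1), ∏ i ∈ t, f i + f a * ∑ t ∈ s.powersetCard j, ∏ i ∈ t, f i := by
  have hnotMem {m : ℕ} {t : Finset ι} (ht : t ∈ s.powersetCard m) : a ∉ t :=
    fun hat ↦ ha ((mem_powersetCard.1 ht).1 hat)
  have hdisj : Disjoint (s.powersetCard (j + 1)) ((s.powersetCard j).image (insert a)) := by
    refine Finset.disjoint_left.2 fun t ht ht' ↦ ?_
    obtain ⟨u, -, rfl⟩ := mem_image.1 ht'
    exact hnotMem ht (mem_insert_self a u)
  rw [powersetCard_succ_insert ha, sum_union hdisj, sum_image, mul_sum]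
  · exact congrArg _ (sum_congr rfl fun t ht ↦ prod_insert (hnotMem ht))
  · intro t ht u hu h
    rw [← erase_insert (hnotMem ht), h, erase_insert (hnotMem hu)]

lemma sum_powersetCard_prod_le {f : ι → K} (hf : ∀ i ∈ s, 0 ≤ f i) (j : ℕ) :
    ∑ t ∈ s.powersetCard j, ∏ i ∈ t, f i ≤ (∑ i ∈ s, f i) ^ j / j ! := by
  classical
  induction s using Finset.induction_on generalizing j with
  | empty =>
    rcases j with - | j
    · simp
    · rw [powersetCard_eq_empty.2 (by simp)]
      simp
  | insert a s ha ih =>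
    have hs : ∀ i ∈ s, 0 ≤ f i := fun i hi ↦ hf i (mem_insert_of_mem hi)
    have hfa : 0 ≤ f a := hf a (mem_insert_self a s)
    have hsum : 0 ≤ ∑ i ∈ s, f i := sum_nonneg hs
    rcases j with - | j
    · simp
    calc ∑ t ∈ (insert a s).powersetCard (j + 1), ∏ i ∈ t, f i
      _ = ∑ t ∈ s.powersetCard (j + 1), ∏ i ∈ t, f i +
          f a * ∑ t ∈ s.powersetCard j, ∏ i ∈ t, f i := sum_powersetCard_succ_insert_prod ha f j
      _ ≤ (∑ i ∈ s, f i) ^ (j + 1) / (j + 1)! + f a * ((∑ i ∈ s, f i) ^ j / j !) := by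
        gcongr <;> exact ih hs _
      _ = ((∑ i ∈ s, f i) ^ (j + 1) + (j + 1 : ℕ) * (∑ i ∈ s, f i) ^ (j + 1 - 1) * f a) /
          (j + 1)! := by
        rw [Nat.factorial_succ]
        push_cast
        field_simp
      _ ≤ (∑ i ∈ insert a s, f i) ^ (j + 1) / (j + 1)! := by
        rw [sum_insert ha, add_comm (f a)]
        gcongr
        exact pow_add_mul_le_add_pow hsum (by positivity) _

lemma sum_powerset_card_ge_prod_le {f : ι → K} (hf : ∀ i ∈ s, 0 ≤ f i) (j : ℕ) :
    ∑ t ∈ s.powerset with j ≤ #t, ∏ i ∈ t, f i ≤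
      ∑ m ∈ Ico j (#s + 1), (∑ i ∈ s, f i) ^ m / m ! := by
  rw [← sum_fiberwise_of_maps_to (t := Ico j (#s + 1)) (g := card) fun t ht ↦ by
    rw [mem_filter, mem_powerset] at ht
    exact mem_Ico.2 ⟨ht.2, Nat.lt_succ_of_le (card_le_card ht.1)⟩]
  gcongr with m hm
  refine le_of_eq_of_le (sum_congr ?_ fun _ _ ↦ rfl) (sum_powersetCard_prod_le hf m)
  ext t
  simp only [mem_filter, mem_powerset, mem_powersetCard, mem_Ico] at hm ⊢
  grind

lemma pow_div_factorial_le_pow_self_div_factorial (k i : ℕ) :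
    (k : K) ^ i / i ! ≤ (k : K) ^ k / k ! := by
  rw [div_le_div_iff₀ (by positivity) (by positivity)]
  norm_cast
  rcases le_total k i with h | h
  · calc k ^ i * k ! = k ^ k * (k ! * k ^ (i - k)) := by
          rw [mul_left_comm, ← pow_add, Nat.add_sub_cancel' h, mul_comm]
      _ ≤ k ^ k * i ! := by gcongr; exact Nat.factorial_mul_pow_sub_le_factorial h
  · calc k ^ i * k ! ≤ k ^ i * (i ! * k ^ (k - i)) := by
          gcongr
          rw [← Nat.factorial_mul_descFactorial (Nat.sub_le k i), Nat.sub_sub_self h]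
          gcongr
          exact Nat.descFactorial_le_pow _ _
      _ = k ^ k * i ! := by
          rw [mul_left_comm, ← pow_add, Nat.add_sub_cancel' h, mul_comm]

lemma sum_Ico_mul_pow_div_factorial_le (k j M : ℕ) {r : K} (hr₀ : 0 ≤ r) (hr₁ : r < 1) :
    ∑ m ∈ Ico j M, (r * k) ^ m / m ! ≤ (k : K) ^ k / k ! * (r ^ j / (1 - r)) :=
  calc
    ∑ m ∈ Ico j M, (r * k) ^ m / m ! ≤ ∑ m ∈ Ico j M, (k : K) ^ k / k ! * r ^ m := by
      gcongr with m
      rw [mul_pow, mul_div_assoc, mul_comm]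
      gcongr ?_ * _
      exact pow_div_factorial_le_pow_self_div_factorial k m
    _ ≤ (k : K) ^ k / k ! * (r ^ j / (1 - r)) := by
      rw [← mul_sum]
      gcongr
      exact geom_sum_Ico_le_of_lt_one hr₀ hr₁

end ElementarySymmetric

section Squarefree

lemma sum_comp_le_sum_of_injOn {ι κ M : Type*} [AddCommMonoid M] [PartialOrder M]
    [IsOrderedAddMonoid M] {s : Finset ι} {t : Finset κ} {e : ι → κ} {f : κ → M}
    (he : Set.MapsTo e s t) (hinj : Set.InjOn e s) (hf : ∀ y ∈ t, 0 ≤ f y) :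
    ∑ x ∈ s, f (e x) ≤ ∑ y ∈ t, f y := by
  classical
  rw [← sum_image hinj]
  exact sum_le_sum_of_subset_of_nonneg (image_subset_iff.2 he) fun y hy _ ↦ hf y hy

lemma sum_one_div_squarefree_le {N k j : ℕ} {r : ℝ} (hr₀ : 0 ≤ r) (hr₁ : r < 1)
    (hprimes : ∑ p ∈ N.primesLE, (1 / p : ℝ) ≤ r * k) :
    ∑ s ∈ Ioc 0 N with Squarefree s ∧ j ≤ Ω s, (1 / s : ℝ) ≤
      (k : ℝ) ^ k / k ! * (r ^ j / (1 - r)) := by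
  calc ∑ s ∈ Ioc 0 N with Squarefree s ∧ j ≤ Ω s, (1 / s : ℝ)
    _ = ∑ s ∈ Ioc 0 N with Squarefree s ∧ j ≤ Ω s, ∏ p ∈ s.primeFactors, (1 / p : ℝ) := by
      refine sum_congr rfl fun s hs ↦ ?_
      conv_lhs => rw [← Nat.prod_primeFactors_of_squarefree (mem_filter.1 hs).2.1]
      simp [prod_inv_distrib]
    _ ≤ ∑ t ∈ N.primesLE.powerset with j ≤ #t, ∏ p ∈ t, (1 / p : ℝ) := by
      refine sum_comp_le_sum_of_injOn (e := Nat.primeFactors)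
        (f := fun t ↦ ∏ p ∈ t, (1 / p : ℝ)) (fun s hs ↦ ?_) (fun s hs s' hs' h ↦ ?_)
        fun t _ ↦ by positivity
      · obtain ⟨hsN, hsq, hj⟩ := mem_filter.1 hs
        rw [← (ArithmeticFunction.cardDistinctFactors_eq_cardFactors_iff_squarefree
          (mem_Ioc.1 hsN).1.ne').2 hsq, ArithmeticFunction.cardDistinctFactors_apply] at hj
        refine mem_filter.2 ⟨mem_powerset.2 fun p hp ↦ ?_, hj⟩
        exact Nat.mem_primesLE.2 ⟨(Nat.le_of_mem_primeFactors hp).trans (mem_Ioc.1 hsN).2,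
          Nat.prime_of_mem_primeFactors hp⟩
      · rw [← Nat.prod_primeFactors_of_squarefree (mem_filter.1 hs).2.1, h,
          Nat.prod_primeFactors_of_squarefree (mem_filter.1 hs').2.1]
    _ ≤ ∑ m ∈ Ico j (#N.primesLE + 1), (∑ p ∈ N.primesLE, (1 / p : ℝ)) ^ m / m ! :=
      sum_powerset_card_ge_prod_le (fun p _ ↦ by positivity) j
    _ ≤ ∑ m ∈ Ico j (#N.primesLE + 1), (r * k) ^ m / m ! := by gcongr
    _ ≤ (k : ℝ) ^ k / k ! * (r ^ j / (1 - r)) := sum_Ico_mul_pow_div_factorial_le k j _ hr₀ hr₁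

end Squarefree

section LargeOmega

/-- The integers `1 ≤ n ≤ N` with at least `k` prime factors, counted with multiplicity. -/
def largeOmega (N k : ℕ) : Finset ℕ := {n ∈ Ioc 0 N | k ≤ Ω n}

lemma largeOmega_eq_filter_primeFactorsList (N k : ℕ) :
    largeOmega N k = {n ∈ Icc 1 N | k ≤ n.primeFactorsList.length} := rfl

lemma mem_largeOmega {N k n : ℕ} : n ∈ largeOmega N k ↔ (0 < n ∧ n ≤ N) ∧ k ≤ Ω n := by
  rw [largeOmega, mem_filter, mem_Ioc]

/-- The integer `b` in the decomposition `n = b ^ 2 * s` with `s` squarefree. -/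
noncomputable def squareRootPart (n : ℕ) : ℕ := (Nat.sq_mul_squarefree n).choose_spec.choose

/-- The squarefree integer `s` in the decomposition `n = b ^ 2 * s`. -/
noncomputable def squarefreePart (n : ℕ) : ℕ := (Nat.sq_mul_squarefree n).choose

variable {n N k : ℕ} {r : ℝ}

lemma squareRootPart_sq_mul_squarefreePart (n : ℕ) :
    squareRootPart n ^ 2 * squarefreePart n = n :=
  (Nat.sq_mul_squarefree n).choose_spec.choose_spec.1

lemma cast_eq_squareRootPart_sq_mul_squarefreePart (n : ℕ) :
    (n : ℝ) = squareRootPart n ^ 2 * squarefreePart n :=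
  mod_cast (squareRootPart_sq_mul_squarefreePart n).symm

lemma squarefree_squarefreePart (n : ℕ) : Squarefree (squarefreePart n) :=
  (Nat.sq_mul_squarefree n).choose_spec.choose_spec.2

lemma squarefreePart_pos (n : ℕ) : 0 < squarefreePart n :=
  (squarefree_squarefreePart n).ne_zero.bot_lt

lemma squareRootPart_pos (hn : 0 < n) : 0 < squareRootPart n := by
  refine Nat.pos_of_ne_zero fun hb ↦ hn.ne' ?_
  rw [← squareRootPart_sq_mul_squarefreePart n, hb]
  simp

lemma squarefreePart_dvd (n : ℕ) : squarefreePart n ∣ n :=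
  Dvd.intro_left _ (squareRootPart_sq_mul_squarefreePart n)

lemma squareRootPart_dvd (n : ℕ) : squareRootPart n ∣ n :=
  (dvd_pow_self _ two_ne_zero).trans (Dvd.intro _ (squareRootPart_sq_mul_squarefreePart n))

lemma cardFactors_eq_squareRootPart_add_squarefreePart (hn : 0 < n) :
    Ω n = 2 * Ω (squareRootPart n) + Ω (squarefreePart n) := by
  conv_lhs => rw [← squareRootPart_sq_mul_squarefreePart n]
  rw [ArithmeticFunction.cardFactors_mul (pow_pos (squareRootPart_pos hn) 2).ne'
    (squarefreePart_pos n).ne', ArithmeticFunction.cardFactors_pow]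

lemma sum_largeOmega_le_sum_sum_squarefree {w : ℕ → ℝ} (hw : ∀ b, 0 ≤ w b) (N k : ℕ) :
    ∑ n ∈ largeOmega N k, w (squareRootPart n) / n ≤
      ∑ b ∈ Ioc 0 N, w b / b ^ 2 *
        ∑ s ∈ Ioc 0 N with Squarefree s ∧ k - 2 * Ω b ≤ Ω s, (1 / s : ℝ) := by
  let T (b : ℕ) : Finset ℕ := {s ∈ Ioc 0 N | Squarefree s ∧ k - 2 * Ω b ≤ Ω s}
  let g (y : Σ _ : ℕ, ℕ) : ℝ := w y.1 / y.1 ^ 2 * (1 / y.2)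
  calc ∑ n ∈ largeOmega N k, w (squareRootPart n) / n
    _ = ∑ n ∈ largeOmega N k, g ⟨squareRootPart n, squarefreePart n⟩ := by
      refine sum_congr rfl fun n _ ↦ ?_
      rw [cast_eq_squareRootPart_sq_mul_squarefreePart n]
      simp only [g, div_mul_div_comm, mul_one]
    _ ≤ ∑ y ∈ (Ioc 0 N).sigma T, g y := by
      refine sum_comp_le_sum_of_injOn (f := g) (fun n hn ↦ ?_) (fun n _ n' _ h ↦ ?_) fun y _ ↦
        mul_nonneg (div_nonneg (hw _) (by positivity)) (by positivity)
      · obtain ⟨⟨hn, hnN⟩, hk⟩ := mem_largeOmega.1 hn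
        rw [cardFactors_eq_squareRootPart_add_squarefreePart hn] at hk
        refine mem_sigma.2 ⟨mem_Ioc.2 ⟨squareRootPart_pos hn, ?_⟩, mem_filter.2
          ⟨mem_Ioc.2 ⟨squarefreePart_pos n, ?_⟩, squarefree_squarefreePart n,
            tsub_le_iff_left.2 hk⟩⟩
        · exact (Nat.le_of_dvd hn (squareRootPart_dvd n)).trans hnN
        · exact (Nat.le_of_dvd hn (squarefreePart_dvd n)).trans hnN
      · simp only [Sigma.mk.injEq, heq_eq_eq] at h
        rw [← squareRootPart_sq_mul_squarefreePart n, h.1, h.2,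
          squareRootPart_sq_mul_squarefreePart]
    _ = ∑ b ∈ Ioc 0 N, w b / b ^ 2 * ∑ s ∈ T b, (1 / s : ℝ) := by
      simp only [g, sum_sigma, mul_sum]

lemma pow_tsub_le_pow_mul_inv_pow {K : Type*} [Field K] [LinearOrder K] [IsStrictOrderedRing K]
    {r : K} (hr₀ : 0 < r) (hr₁ : r ≤ 1) (k m : ℕ) : r ^ (k - m) ≤ r ^ k * r⁻¹ ^ m := by
  rw [inv_pow, ← div_eq_mul_inv, le_div_iff₀ (by positivity), ← pow_add]
  exact pow_le_pow_of_le_one hr₀.le hr₁ le_tsub_add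

lemma sum_largeOmega_le (hr₀ : 0 < r) (hr₁ : r < 1)
    (hprimes : ∑ p ∈ N.primesLE, (1 / p : ℝ) ≤ r * k) {w : ℕ → ℝ} (hw : ∀ b, 0 ≤ w b) :
    ∑ n ∈ largeOmega N k, w (squareRootPart n) / n ≤
      (r * k) ^ k / k ! / (1 - r) * ∑ b ∈ Ioc 0 N, w b / b ^ 2 * r⁻¹ ^ (2 * Ω b) := by
  refine (sum_largeOmega_le_sum_sum_squarefree hw N k).trans ?_
  rw [mul_sum]
  refine sum_le_sum fun b _ ↦ ?_
  rw [mul_left_comm]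
  gcongr ?_ * ?_
  · exact div_nonneg (hw b) (by positivity)
  calc ∑ s ∈ Ioc 0 N with Squarefree s ∧ k - 2 * Ω b ≤ Ω s, (1 / s : ℝ)
    _ ≤ (k : ℝ) ^ k / k ! * (r ^ (k - 2 * Ω b) / (1 - r)) :=
      sum_one_div_squarefree_le hr₀.le hr₁ hprimes
    _ ≤ (k : ℝ) ^ k / k ! * (r ^ k * r⁻¹ ^ (2 * Ω b) / (1 - r)) := by
      gcongr
      exact pow_tsub_le_pow_mul_inv_pow hr₀ hr₁.le k _
    _ = (r * k) ^ k / k ! / (1 - r) * r⁻¹ ^ (2 * Ω b) := by rw [mul_pow]; ring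

lemma sum_sum_primeFactors_largeOmega_succ_le {g : ℕ → ℝ} (hg : ∀ p, 0 ≤ g p) (N k : ℕ) :
    ∑ n ∈ largeOmega N (k + 1), ∑ p ∈ n.primeFactors, g p ≤
      ∑ m ∈ largeOmega N k, ∑ p ∈ (N / m).primesLE, g p := by
  rw [sum_sigma', sum_sigma']
  refine sum_comp_le_sum_of_injOn (e := fun y : Σ _ : ℕ, ℕ ↦ ⟨y.1 / y.2, y.2⟩)
    (f := fun y : Σ _ : ℕ, ℕ ↦ g y.2) ?_ ?_ fun y _ ↦ hg y.2
  · rintro ⟨n, p⟩ hy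
    obtain ⟨hn, hp⟩ : n ∈ largeOmega N (k + 1) ∧ p ∈ n.primeFactors := mem_sigma.1 hy
    obtain ⟨hprime, ⟨m, rfl⟩, hn₀⟩ := Nat.mem_primeFactors.1 hp
    obtain ⟨⟨-, hN⟩, hk⟩ := mem_largeOmega.1 hn
    have hm : m ≠ 0 := right_ne_zero_of_mul hn₀
    rw [ArithmeticFunction.cardFactors_mul hprime.ne_zero hm,
      ArithmeticFunction.cardFactors_apply_prime hprime, add_comm 1, add_le_add_iff_right] at hk
    simp only [Nat.mul_div_cancel_left m hprime.pos]
    exact mem_sigma.2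
      ⟨mem_largeOmega.2 ⟨⟨hm.bot_lt, (Nat.le_mul_of_pos_left m hprime.pos).trans hN⟩, hk⟩,
        Nat.mem_primesLE.2 ⟨(Nat.le_div_iff_mul_le hm.bot_lt).2 hN, hprime⟩⟩
  · rintro ⟨n, p⟩ hy ⟨n', p'⟩ hy' h
    have hp := Nat.dvd_of_mem_primeFactors (mem_sigma.1 hy).2
    have hp' := Nat.dvd_of_mem_primeFactors (mem_sigma.1 hy').2
    simp only [Sigma.mk.injEq, heq_eq_eq] at h hp hp' ⊢
    obtain ⟨hdiv, rfl⟩ := h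
    exact ⟨(Nat.div_left_inj hp hp').1 hdiv, rfl⟩

lemma sum_sum_primeFactors_log_largeOmega_succ_le (N k : ℕ) :
    ∑ n ∈ largeOmega N (k + 1), ∑ p ∈ n.primeFactors, log p ≤
      log 4 * N * ∑ m ∈ largeOmega N k, (1 / m : ℝ) := by
  calc ∑ n ∈ largeOmega N (k + 1), ∑ p ∈ n.primeFactors, log p
    _ ≤ ∑ m ∈ largeOmega N k, ∑ p ∈ (N / m).primesLE, log p :=
      sum_sum_primeFactors_largeOmega_succ_le (fun p ↦ log_natCast_nonneg p) N k
    _ = ∑ m ∈ largeOmega N k, θ (N / m : ℝ) := by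
      simp only [Chebyshev.theta_eq_sum_primesLE, Nat.floor_div_eq_div]
    _ ≤ ∑ m ∈ largeOmega N k, log 4 * (N / m : ℝ) := by
      gcongr with m
      exact Chebyshev.theta_le_log4_mul_x (by positivity)
    _ = log 4 * N * ∑ m ∈ largeOmega N k, (1 / m : ℝ) := by
      rw [mul_sum]
      exact sum_congr rfl fun m _ ↦ by ring

lemma log_squarefreePart_le (hn : 0 < n) :
    log (squarefreePart n) ≤ ∑ p ∈ n.primeFactors, log p := by
  conv_lhs => rw [← Nat.prod_primeFactors_of_squarefree (squarefree_squarefreePart n)]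
  rw [Nat.cast_prod, log_prod fun p hp ↦
    Nat.cast_ne_zero.2 (Nat.pos_of_mem_primeFactors hp).ne']
  exact sum_le_sum_of_subset_of_nonneg (Nat.primeFactors_mono (squarefreePart_dvd n) hn.ne')
    fun p _ _ ↦ log_natCast_nonneg p

lemma log_le_sum_primeFactors_add {x ε : ℝ} (hn : 0 < n) (hnx : n ≤ x) (hε₀ : 0 < ε)
    (hε₁ : ε ≤ 1) :
    log x ≤ ∑ p ∈ n.primeFactors, log p + 1 / ε * (x / n * (squareRootPart n : ℝ) ^ (2 * ε)) := by
  have hn' : (0 : ℝ) < n := mod_cast hn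
  have hs : (0 : ℝ) < squarefreePart n := mod_cast squarefreePart_pos n
  have hb : (0 : ℝ) < squareRootPart n := mod_cast squareRootPart_pos hn
  have hx : 0 < x := hn'.trans_le hnx
  have hxs : x / squarefreePart n = x / n * squareRootPart n ^ 2 := by
    rw [cast_eq_squareRootPart_sq_mul_squarefreePart n]
    field_simp
  have hlog : log (x / squarefreePart n) ≤
      1 / ε * (x / n * (squareRootPart n : ℝ) ^ (2 * ε)) := calc
    log (x / squarefreePart n)
    _ ≤ (x / n * squareRootPart n ^ 2) ^ ε / ε := by
      rw [hxs]
      exact log_le_rpow_div (by positivity) hε₀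
    _ = 1 / ε * ((x / n) ^ ε * (squareRootPart n : ℝ) ^ (2 * ε)) := by
      rw [mul_rpow (by positivity) (by positivity), ← rpow_natCast_mul hb.le]
      push_cast
      ring
    _ ≤ 1 / ε * (x / n * (squareRootPart n : ℝ) ^ (2 * ε)) := by
      gcongr
      exact rpow_le_self_of_one_le ((one_le_div hn').2 hnx) hε₁
  have := log_squarefreePart_le hn
  rw [log_div hx.ne' hs.ne'] at hlog
  linarith

lemma card_largeOmega_succ_mul_log_le {x ε : ℝ} (hx : 0 ≤ x) (hε₀ : 0 < ε) (hε₁ : ε ≤ 1) (k : ℕ) :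
    #(largeOmega ⌊x⌋₊ (k + 1)) * log x ≤
      (log 4 + 1 / ε) * x * ∑ n ∈ largeOmega ⌊x⌋₊ k, (squareRootPart n : ℝ) ^ (2 * ε) / n := by
  set W := ∑ n ∈ largeOmega ⌊x⌋₊ k, (squareRootPart n : ℝ) ^ (2 * ε) / n
  have hsub : largeOmega ⌊x⌋₊ (k + 1) ⊆ largeOmega ⌊x⌋₊ k :=
    monotone_filter_right _ fun n _ ↦ k.le_succ.trans
  have hone : ∑ n ∈ largeOmega ⌊x⌋₊ k, (1 / n : ℝ) ≤ W := by
    refine sum_le_sum fun n hn ↦ ?_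
    gcongr
    exact one_le_rpow (mod_cast squareRootPart_pos (mem_largeOmega.1 hn).1.1) (by positivity)
  calc #(largeOmega ⌊x⌋₊ (k + 1)) * log x
    _ = ∑ _n ∈ largeOmega ⌊x⌋₊ (k + 1), log x := by rw [sum_const, nsmul_eq_mul]
    _ ≤ ∑ n ∈ largeOmega ⌊x⌋₊ (k + 1), (∑ p ∈ n.primeFactors, log p +
        1 / ε * (x / n * (squareRootPart n : ℝ) ^ (2 * ε))) := by
      refine sum_le_sum fun n hn ↦ ?_
      obtain ⟨⟨hn, hnx⟩, -⟩ := mem_largeOmega.1 hn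
      exact log_le_sum_primeFactors_add hn ((Nat.le_floor_iff hx).1 hnx) hε₀ hε₁
    _ = ∑ n ∈ largeOmega ⌊x⌋₊ (k + 1), ∑ p ∈ n.primeFactors, log p +
        1 / ε * x * ∑ n ∈ largeOmega ⌊x⌋₊ (k + 1), (squareRootPart n : ℝ) ^ (2 * ε) / n := by
      rw [sum_add_distrib, mul_sum]
      exact congrArg _ (sum_congr rfl fun n _ ↦ by ring)
    _ ≤ log 4 * ⌊x⌋₊ * ∑ n ∈ largeOmega ⌊x⌋₊ k, (1 / n : ℝ) + 1 / ε * x * W := by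
      gcongr
      · exact sum_sum_primeFactors_log_largeOmega_succ_le _ k
      · exact sum_le_sum_of_subset_of_nonneg hsub fun n _ _ ↦ by positivity
    _ ≤ log 4 * x * W + 1 / ε * x * W := by
      gcongr
      exact Nat.floor_le hx
    _ = (log 4 + 1 / ε) * x * W := by ring

end LargeOmega

section Summability

lemma summable_of_summable_primes {f : ℕ →*₀ ℝ} {ρ : ℝ} (hf : ∀ n, 0 ≤ f n) (hρ : ρ < 1)
    (hfρ : ∀ p, p.Prime → f p ≤ ρ) (hsum : Summable ({p : ℕ | p.Prime}.indicator f)) :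
    Summable f := by
  have hfactor {p : ℕ} (hp : p.Prime) : (1 - f p)⁻¹ ≤ exp (f p / (1 - ρ)) := by
    have hfp := hfρ p hp
    have h : 0 < 1 - f p := by linarith
    calc (1 - f p)⁻¹ = f p / (1 - f p) + 1 := by field_simp; ring
      _ ≤ f p / (1 - ρ) + 1 := by
        gcongr
        exact hf p
      _ ≤ exp (f p / (1 - ρ)) := add_one_le_exp _
  refine summable_of_sum_range_le (c := exp ((∑' p, {p : ℕ | p.Prime}.indicator f p) / (1 - ρ)))
    hf fun N ↦ ?_
  have hsmooth := (EulerProduct.summable_and_hasSum_smoothNumbers_prod_primesBelow_geometric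
    (f := (f : ℕ →* ℝ)) (fun {p} hp ↦ (norm_of_nonneg (hf p)).trans_lt ((hfρ p hp).trans_lt hρ))
    N).2
  calc ∑ n ∈ range N, f n
    _ ≤ ∑ n ∈ range N, (N.smoothNumbers : Set ℕ).indicator f n := by
      refine sum_le_sum fun n hn ↦ ?_
      rcases n.eq_zero_or_pos with rfl | hn₀
      · rw [map_zero]
        exact Set.indicator_nonneg (fun n _ ↦ hf n) 0
      · rw [Set.indicator_of_mem (Nat.mem_smoothNumbers_of_lt hn₀ (mem_range.1 hn))]
    _ ≤ ∏ p ∈ N.primesBelow, (1 - f p)⁻¹ :=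
      sum_le_hasSum _ (fun n _ ↦ Set.indicator_nonneg (fun n _ ↦ hf n) n)
        (hasSum_subtype_iff_indicator.1 hsmooth)
    _ ≤ ∏ p ∈ N.primesBelow, exp ({p : ℕ | p.Prime}.indicator f p / (1 - ρ)) := by
      refine prod_le_prod (fun p hp ↦ ?_) fun p hp ↦ ?_
      · have := hfρ p (Nat.prime_of_mem_primesBelow hp)
        exact inv_nonneg.2 (by linarith)
      · rw [Set.indicator_of_mem (s := {p : ℕ | p.Prime}) (Nat.prime_of_mem_primesBelow hp)]
        exact hfactor (Nat.prime_of_mem_primesBelow hp)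
    _ ≤ _ := by
      rw [← exp_sum, ← sum_div]
      gcongr
      exact hsum.sum_le_tsum _ fun p _ ↦ Set.indicator_nonneg (fun p _ ↦ hf p) p

lemma summable_pow_cardFactors_div_rpow {z σ : ℝ} (hz : 0 ≤ z) (hσ : 1 < σ)
    (hzσ : z < 2 ^ σ) : Summable fun n : ℕ ↦ z ^ Ω n / (n : ℝ) ^ σ := by
  have hσ₀ : σ ≠ 0 := by linarith
  let f : ℕ →*₀ ℝ :=
    { toFun n := z ^ Ω n / (n : ℝ) ^ σ
      map_zero' := by simp [zero_rpow hσ₀]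
      map_one' := by simp
      map_mul' m n := by
        rcases eq_or_ne m 0 with rfl | hm
        · simp [zero_rpow hσ₀]
        rcases eq_or_ne n 0 with rfl | hn
        · simp [zero_rpow hσ₀]
        rw [ArithmeticFunction.cardFactors_mul hm hn, pow_add, Nat.cast_mul,
          mul_rpow m.cast_nonneg n.cast_nonneg, mul_div_mul_comm] }
  have hf (n : ℕ) : 0 ≤ f n := div_nonneg (pow_nonneg hz _) (rpow_nonneg n.cast_nonneg _)
  have hfprime {p : ℕ} (hp : p.Prime) : f p = z / (p : ℝ) ^ σ := by
    change z ^ Ω p / _ = _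
    rw [ArithmeticFunction.cardFactors_apply_prime hp, pow_one]
  refine summable_of_summable_primes (f := f) hf ((div_lt_one (by positivity)).2 hzσ)
    (fun p hp ↦ ?_) ?_
  · rw [hfprime hp]
    gcongr
    exact mod_cast hp.two_le
  · refine Summable.of_nonneg_of_le (Set.indicator_nonneg fun n _ ↦ hf n)
      (Set.indicator_le' (fun p hp ↦ ?_) fun n _ ↦ by positivity)
      ((summable_nat_rpow_inv.2 hσ).mul_left z)
    rw [hfprime hp, div_eq_mul_inv]

lemma exists_summable_squareRoot_weight {z : ℝ} (hz₀ : 0 ≤ z) (hz : z < 4) :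
    ∃ ε : ℝ, 0 < ε ∧ ε ≤ 1 ∧ Summable fun b : ℕ ↦ (b : ℝ) ^ (2 * ε) / b ^ 2 * z ^ Ω b := by
  have hcont : ContinuousAt (fun ε : ℝ ↦ (2 : ℝ) ^ (2 - 2 * ε)) 0 := by
    fun_prop (disch := norm_num)
  have hnear : ∀ᶠ ε : ℝ in nhdsWithin 0 (Set.Ioi 0), ε < 1 / 2 ∧ z < 2 ^ (2 - 2 * ε) :=
    nhdsWithin_le_nhds ((eventually_lt_nhds (by norm_num)).and
      (hcont.eventually_const_lt (by norm_num; exact hz)))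
  obtain ⟨ε, ⟨hε, hzε⟩, hε₀⟩ := (hnear.and eventually_mem_nhdsWithin).exists
  refine ⟨ε, hε₀, by linarith, (summable_pow_cardFactors_div_rpow hz₀ (by linarith) hzε).congr
    fun b ↦ ?_⟩
  rcases b.eq_zero_or_pos with rfl | hb
  · simp [zero_rpow (show 2 - 2 * ε ≠ 0 by linarith)]
  · rw [rpow_sub (mod_cast hb), rpow_two]
    field_simp

end Summability

section Main

lemma exists_card_largeOmega_succ_mul_log_le {α β : ℝ} (hα : 1 / 2 < α) (hβ : β < 1) :
    ∃ C : ℝ, 0 ≤ C ∧ ∀ x r : ℝ, ∀ k : ℕ, 0 ≤ x → α ≤ r → r ≤ β →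
      ∑ p ∈ ⌊x⌋₊.primesLE, (1 / p : ℝ) ≤ r * k →
      #(largeOmega ⌊x⌋₊ (k + 1)) * log x ≤ C * x * ((r * k) ^ k / k !) := by
  have : 0 < α := by linarith
  have hαsq : α⁻¹ ^ 2 < 4 := by
    rw [inv_pow, inv_lt_comm₀ (by positivity) (by norm_num)]
    nlinarith
  obtain ⟨ε, hε₀, hε₁, hsum⟩ := exists_summable_squareRoot_weight (z := α⁻¹ ^ 2) (by positivity)
    hαsq
  set T := ∑' b : ℕ, (b : ℝ) ^ (2 * ε) / b ^ 2 * (α⁻¹ ^ 2) ^ Ω b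
  have : 0 ≤ T := tsum_nonneg fun b ↦ by positivity
  have : 0 < 1 - β := by linarith
  refine ⟨(log 4 + 1 / ε) * (T / (1 - β)), by positivity, fun x r k hx hαr hrβ hprimes ↦ ?_⟩
  have hr₀ : 0 < r := by linarith
  have hr₁ : r < 1 := by linarith
  have hweight : ∑ b ∈ Ioc 0 ⌊x⌋₊, (b : ℝ) ^ (2 * ε) / b ^ 2 * r⁻¹ ^ (2 * Ω b) ≤ T := calc
    ∑ b ∈ Ioc 0 ⌊x⌋₊, (b : ℝ) ^ (2 * ε) / b ^ 2 * r⁻¹ ^ (2 * Ω b)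
    _ ≤ ∑ b ∈ Ioc 0 ⌊x⌋₊, (b : ℝ) ^ (2 * ε) / b ^ 2 * (α⁻¹ ^ 2) ^ Ω b := by
      simp only [pow_mul]
      gcongr
    _ ≤ T := hsum.sum_le_tsum _ fun b _ ↦ by positivity
  calc #(largeOmega ⌊x⌋₊ (k + 1)) * log x
    _ ≤ (log 4 + 1 / ε) * x * ∑ n ∈ largeOmega ⌊x⌋₊ k, (squareRootPart n : ℝ) ^ (2 * ε) / n :=
      card_largeOmega_succ_mul_log_le hx hε₀ hε₁ k
    _ ≤ (log 4 + 1 / ε) * x * ((r * k) ^ k / k ! / (1 - r) *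
        ∑ b ∈ Ioc 0 ⌊x⌋₊, (b : ℝ) ^ (2 * ε) / b ^ 2 * r⁻¹ ^ (2 * Ω b)) := by
      gcongr
      exact sum_largeOmega_le (w := fun b ↦ (b : ℝ) ^ (2 * ε)) hr₀ hr₁ hprimes
        fun b ↦ by positivity
    _ ≤ (log 4 + 1 / ε) * x * ((r * k) ^ k / k ! / (1 - β) * T) := by gcongr
    _ = (log 4 + 1 / ε) * (T / (1 - β)) * x * ((r * k) ^ k / k !) := by ring

lemma add_pow_le_pow_mul_exp {a b c : ℝ} {k : ℕ} (ha : 0 < a) (hc : 0 ≤ c) (hk : k ≤ b * a) :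
    (a + c) ^ k ≤ a ^ k * exp (b * c) := by
  calc (a + c) ^ k = (a * (c / a + 1)) ^ k := by field_simp; ring
    _ ≤ (a * exp (c / a)) ^ k := by gcongr; exact add_one_le_exp _
    _ = a ^ k * exp (k * (c / a)) := by rw [mul_pow, exp_nat_mul]
    _ ≤ a ^ k * exp (b * a * (c / a)) := by gcongr
    _ = a ^ k * exp (b * c) := by field_simp

lemma exists_eventually_card_largeOmega_succ_le {a b : ℝ} (ha : 1 < a) (hb₀ : 0 < b) (hb : b < 2) :
    ∃ C : ℝ, ∀ᶠ x in Filter.atTop, ∀ k : ℕ, a * log (log x) ≤ k + 1 →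
      k + 1 ≤ b * log (log x) →
      #(largeOmega ⌊x⌋₊ (k + 1)) ≤ C * (x / log x) * (log (log x) ^ k / k !) := by
  obtain ⟨c, hc, hmertens⟩ := exists_sum_one_div_primesLE_le
  obtain ⟨m, hm, hma⟩ := exists_between ha
  have hm₀ : 0 < m := by linarith
  obtain ⟨C, hC, hcard⟩ := exists_card_largeOmega_succ_mul_log_le (α := b⁻¹) (β := m⁻¹)
    (by rw [lt_inv_comm₀ (by norm_num) hb₀]; linarith) (inv_lt_one_of_one_lt₀ hm)
  refine ⟨C * exp (b * c), ?_⟩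
  have hloglog : Filter.Tendsto (fun x ↦ log (log x)) Filter.atTop Filter.atTop :=
    tendsto_log_atTop.comp tendsto_log_atTop
  filter_upwards [Filter.eventually_ge_atTop 2, hloglog.eventually_gt_atTop 0,
    hloglog.eventually_ge_atTop ((m * c + 1) / (a - m))] with x hx hL hcL k hak hkb
  have hlog : 0 < log x := log_pos (by linarith)
  set L := log (log x)
  have hmk : m * (L + c) ≤ k := by
    rw [div_le_iff₀ (by linarith)] at hcL
    linarith
  have hk₀ : (0 : ℝ) < k := lt_of_lt_of_le (by positivity) hmk
  have hrk : (L + c) / k * k = L + c := div_mul_cancel₀ _ hk₀.ne'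
  suffices h : #(largeOmega ⌊x⌋₊ (k + 1)) * log x ≤ C * exp (b * c) * x * (L ^ k / k !) from
    ((le_div_iff₀ hlog).2 h).trans_eq (by ring)
  calc #(largeOmega ⌊x⌋₊ (k + 1)) * log x
    _ ≤ C * x * (((L + c) / k * k) ^ k / k !) := by
      refine hcard x ((L + c) / k) k (by linarith) ?_ ?_ (hrk.symm ▸ hmertens x hx)
      · rw [inv_le_iff_one_le_mul₀ hb₀, div_mul_eq_mul_div, one_le_div₀ hk₀]
        linarith [mul_nonneg hb₀.le hc]
      · rwa [le_inv_comm₀ (by positivity) hm₀, inv_div, le_div_iff₀ (by positivity)]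
    _ ≤ C * x * (L ^ k * exp (b * c) / k !) := by
      rw [hrk]
      gcongr
      exact add_pow_le_pow_mul_exp hL hc (by linarith)
    _ = C * exp (b * c) * x * (L ^ k / k !) := by ring

end Main

/-- For every `δ > 0` there is a constant `C` such that for all sufficiently large `x` and
every integer `i` with `(1 + δ) log log x ≤ i ≤ (2 - δ) log log x`, the number of positive
integers `n ≤ x` with `Ω(n) ≥ i` is less than `C · (x / log x) · (log log x)^{i-1} / (i-1)!`. -/
theorem count_large_Omega_lt :
    ∀ δ : ℝ, 0 < δ → ∃ C : ℝ, ∃ X : ℝ, ∀ x : ℝ, X ≤ x →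
      ∀ i : ℕ, (1 + δ) * Real.log (Real.log x) ≤ (i : ℝ) →
      (i : ℝ) ≤ (2 - δ) * Real.log (Real.log x) →
      (((Finset.Icc 1 ⌊x⌋₊).filter fun n => i ≤ n.primeFactorsList.length).card : ℝ) <
        C * (x / Real.log x) *
          (Real.log (Real.log x) ^ (i - 1) / (Nat.factorial (i - 1) : ℝ)) := by
  intro δ hδ
  obtain ⟨C, hcard⟩ := exists_eventually_card_largeOmega_succ_le (a := 1 + δ)
    (b := max (2 - δ) 1) (by linarith) (by positivity) (max_lt (by linarith) one_lt_two)
  have hloglog : ∀ᶠ x in Filter.atTop, 0 < log (log x) :=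
    (tendsto_log_atTop.comp tendsto_log_atTop).eventually_gt_atTop 0
  obtain ⟨X, hX⟩ := Filter.eventually_atTop.1
    ((Filter.eventually_gt_atTop 1).and (hloglog.and hcard))
  refine ⟨C + 1, X, fun x hx i hi hi' ↦ ?_⟩
  obtain ⟨hx₁, hL, hbound⟩ := hX x hx
  have hlog : 0 < log x := log_pos hx₁
  have hi₀ : i ≠ 0 := by
    rintro rfl
    exact hi.not_gt (by rw [Nat.cast_zero]; positivity)
  obtain ⟨k, rfl⟩ := Nat.exists_eq_succ_of_ne_zero hi₀
  rw [Nat.cast_succ] at hi hi'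
  rw [← largeOmega_eq_filter_primeFactorsList]
  calc (#(largeOmega ⌊x⌋₊ (k + 1)) : ℝ)
    _ ≤ C * (x / log x) * (log (log x) ^ k / k !) :=
      hbound k hi (hi'.trans (by gcongr; exact le_max_left _ _))
    _ < (C + 1) * (x / log x) * (log (log x) ^ k / k !) := by
      gcongr
      linarith
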